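/- The map U (the μ-a.e. limit of the Chacon-type maps U_n) is not strongly mixing. In fact, for the set A = [0,1/4)×[3/4,1) (so μ(A) = 1/16 and μ(A)² = 1/256), one has μ(U^{−(4^{k−1}−1)}(A) ∩ A) ≥ 1/64 for every k ≥ 3; hence μ(U^{−n}(A) ∩ A) does not converge to μ(A)² as n → ∞. -/

import Mathlib

/-!
The limit map is a cutting-and-stacking construction. At stage `n` the torus is cut into `4 ^ n`
dyadic squares of side `2⁻ⁿ`. All of them except the bottom right one (the spacer) are the levels
of one tower of height `4 ^ n - 1`, whose base is the top left square and whose top is the square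
immediately to the left of the spacer. To pass to stage `n + 1`, the tower is cut into four
subcolumns according to the quadrants of its levels, and these are stacked in the order
top left, top right, spacer, bottom left, spacer, bottom right, spacer.

No spacer is put between the top left and the top right subcolumns. Hence a point in the top left
quadrant of any level of the stage `n` tower returns after `4 ^ n - 1` steps to the same level, and
is translated there by half a side to the right (`stepV_return`). For `n ≥ 2` the square
`A = [0,1/4) × [3/4,1)` is a union of levels, so a quarter of `A`, of measure `1/64`, returns to
`A` at time `4 ^ n - 1`; as `1/64 > 1/256`, the correlations cannot converge to `μ(A)²`.

The tower structure is expressed pointwise for the everywhere defined limit `stepV` (`tower`),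
which agrees almost everywhere with `U`, as do all its iterates since `U` preserves the measure.
-/

open MeasureTheory Filter Set
open scoped ENNReal symmDiff

noncomputable section

instance fact01 : Fact ((0:ℝ) < 1) := ⟨one_pos⟩

/-- The two-dimensional torus `[0,1)²` with coordinatewise addition mod 1. -/
abbrev T2 : Type := AddCircle (1:ℝ) × AddCircle (1:ℝ)

/-- The canonical representative in `[0,1)` of a point of the circle. -/
noncomputable def rep (x : AddCircle (1:ℝ)) : ℝ := ((AddCircle.equivIco 1 0) x : ℝ)

/-- The point of the torus with coordinates `a`, `b` (mod 1). -/
noncomputable def tv (a b : ℝ) : T2 := ((a : AddCircle (1:ℝ)), (b : AddCircle (1:ℝ)))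

open Classical in
/-- The Chacon-type maps `U_n` on the torus. -/
noncomputable def chaconU : ℕ → T2 → T2
  | 0 => id
  | 1 => fun x =>
      if 0 ≤ rep x.1 ∧ rep x.1 < 1/2 ∧ 1/2 ≤ rep x.2 ∧ rep x.2 < 1 then x + tv (1/2) 0
      else if 1/2 ≤ rep x.1 ∧ rep x.1 < 1 ∧ 1/2 ≤ rep x.2 ∧ rep x.2 < 1 then
        x + tv (-(1/2)) (-(1/2))
      else if 0 ≤ rep x.1 ∧ rep x.1 < 1/2 ∧ 0 ≤ rep x.2 ∧ rep x.2 < 1/2 then x + tv 0 (1/2)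
      else x
  | (n+2) => fun x =>
      let s : ℝ := 1 / 2 ^ (n+2)
      let a := rep x.1
      let b := rep x.2
      if 1-4*s ≤ a ∧ a < 1-3*s ∧ s ≤ b ∧ b < 2*s then x + tv (5*s-1) (1-2*s)
      else if 1-3*s ≤ a ∧ a < 1-2*s ∧ s ≤ b ∧ b < 2*s then x + tv s 0
      else if 1-4*s ≤ a ∧ a < 1-3*s ∧ 0 ≤ b ∧ b < s then x + tv (3*s) s
      else if 1-3*s ≤ a ∧ a < 1-2*s ∧ 0 ≤ b ∧ b < s then x + tv s 0
      else if 1-2*s ≤ a ∧ a < 1 ∧ s ≤ b ∧ b < 2*s then x + tv (2*s-1) (1-3*s)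
      else if 1-2*s ≤ a ∧ a < 1-s ∧ 0 ≤ b ∧ b < s then x + tv (2*s-1) (1-s)
      else if 1-s ≤ a ∧ a < 1 ∧ 0 ≤ b ∧ b < s then x
      else chaconU (n+1) x

/-- An automorphism of the torus: measurable, bijective up to null sets with measurable
inverse, and measure-preserving. -/
def IsAutomorphism (U : T2 → T2) : Prop :=
  Measurable U ∧ ∃ V : T2 → T2, Measurable V ∧
    (∀ᵐ x ∂(volume : Measure T2), V (U x) = x) ∧
    (∀ᵐ x ∂(volume : Measure T2), U (V x) = x) ∧
    ∀ A : Set T2, MeasurableSet A → volume (U ⁻¹' A) = volume A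


/-! ### Representatives of points of the circle -/

lemma rep_nonneg (x : AddCircle (1:ℝ)) : 0 ≤ rep x := (AddCircle.equivIco 1 0 x).2.1

lemma rep_lt_one (x : AddCircle (1:ℝ)) : rep x < 1 :=
  (AddCircle.equivIco (1:ℝ) 0 x).2.2.trans_eq (zero_add 1)

lemma coe_rep (x : AddCircle (1:ℝ)) : ((rep x : ℝ) : AddCircle (1:ℝ)) = x :=
  AddCircle.coe_equivIco

lemma rep_coe {a : ℝ} (h0 : 0 ≤ a) (h1 : a < 1) : rep (a : AddCircle (1:ℝ)) = a :=
  AddCircle.equivIco_coe_of_mem (p := (1:ℝ)) (a := 0) ⟨h0, by simpa using h1⟩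

lemma tv_rep (x : T2) : tv (rep x.1) (rep x.2) = x := by
  simp [tv, coe_rep]

lemma tv_add (a b c d : ℝ) : tv a b + tv c d = tv (a + c) (b + d) := by
  simp [tv]

lemma volume_rep_Ico {l r : ℝ} (hl : 0 ≤ l) (hr : r ≤ 1) :
    volume {x : AddCircle (1:ℝ) | l ≤ rep x ∧ rep x < r} = ENNReal.ofReal (r - l) := by
  have hm : Measurable rep :=
    measurable_subtype_coe.comp (AddCircle.measurableEquivIco (1:ℝ) 0).measurable
  have hS : MeasurableSet {x : AddCircle (1:ℝ) | l ≤ rep x ∧ rep x < r} :=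
    (measurableSet_le measurable_const hm).inter (measurableSet_lt hm measurable_const)
  rw [AddCircle.add_projection_respects_measure 1 0 hS]
  apply le_antisymm
  · calc _ ≤ volume (Ico l r ∪ {1}) := by
          apply measure_mono
          rintro y ⟨⟨h1, h2⟩, h3, h4⟩
          rw [zero_add] at h4
          rcases h4.lt_or_eq with h | h
          · left
            change l ≤ rep (y : AddCircle (1:ℝ)) at h1
            change rep (y : AddCircle (1:ℝ)) < r at h2
            rw [rep_coe h3.le h] at h1 h2
            exact ⟨h1, h2⟩
          · right; exact h
      _ ≤ _ := (measure_union_le _ _).trans (by simp)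
  · rw [← Real.volume_Ioo]
    apply measure_mono
    rintro y ⟨h1, h2⟩
    have hr' : rep (y : AddCircle (1:ℝ)) = y := rep_coe (by linarith) (by linarith)
    refine ⟨⟨?_, ?_⟩, by linarith, by linarith⟩
    · exact h1.le.trans_eq hr'.symm
    · exact hr'.trans_lt h2

/-! ### The everywhere defined limit -/

/-- `x` lies neither in the top level of the stage `n` tower nor in the stage `n` spacer. From
stage `n ≥ 1` on, the maps `chaconU` agree at such a point. -/
def Settled (n : ℕ) (x : T2) : Prop :=
  rep x.1 < 1 - 2 * (1 / 2 ^ n) ∨ 1 / 2 ^ n ≤ rep x.2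

lemma Settled.mono {m n : ℕ} {x : T2} (h : Settled n x) (hmn : n ≤ m) : Settled m x := by
  have hs : (1:ℝ) / 2 ^ m ≤ 1 / 2 ^ n :=
    one_div_le_one_div_of_le (by positivity) (pow_le_pow_right₀ (by norm_num) hmn)
  rcases h with h | h
  · left; linarith
  · right; linarith

lemma exists_settled (x : T2) : ∃ n, 1 ≤ n ∧ Settled n x := by
  have h := rep_lt_one x.1
  obtain ⟨n, hn⟩ := exists_pow_lt_of_lt_one (show (0:ℝ) < (1 - rep x.1) / 2 by linarith)
    (show (1/2 : ℝ) < 1 by norm_num)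
  have h2 : Settled n x := by
    left
    rw [one_div_pow] at hn
    linarith
  exact ⟨n + 1, by omega, h2.mono (by omega)⟩

lemma chaconU_succ {n : ℕ} (hn : 1 ≤ n) {x : T2} (h : Settled n x) :
    chaconU (n + 1) x = chaconU n x := by
  obtain ⟨k, rfl⟩ : ∃ k, n = k + 1 := ⟨n - 1, by omega⟩
  have hs : (1:ℝ) / 2 ^ (k + 1) = 2 * (1 / 2 ^ (k + 2)) := by
    rw [pow_succ (2:ℝ) (k + 1)]; field_simp
  have hpos : (0:ℝ) < 1 / 2 ^ (k + 2) := by positivity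
  rw [Settled, hs] at h
  change chaconU (k + 2) x = _
  rw [chaconU]
  dsimp only
  generalize (1:ℝ) / 2 ^ (k + 2) = s at *
  repeat rw [if_neg (by rintro ⟨h1, h2, h3, h4⟩; rcases h with h | h <;> linarith)]

lemma chaconU_stable {n m : ℕ} (hn : 1 ≤ n) (hmn : n ≤ m) {x : T2} (h : Settled n x) :
    chaconU m x = chaconU n x := by
  induction m, hmn using Nat.le_induction with
  | base => rfl
  | succ m hm ih => rw [chaconU_succ (hn.trans hm) (h.mono hm), ih]

/-- The pointwise limit of `chaconU`, defined at every point. -/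
def stepV (x : T2) : T2 := chaconU (exists_settled x).choose x

lemma stepV_eq {n : ℕ} (hn : 1 ≤ n) {x : T2} (h : Settled n x) : stepV x = chaconU n x := by
  obtain ⟨h1, h2⟩ := (exists_settled x).choose_spec
  rw [stepV, ← chaconU_stable h1 (le_max_left _ n) h2, ← chaconU_stable hn (le_max_right _ n) h]

/-! ### Explicit values of the limit -/

lemma stepV_base_left {a b : ℝ} (ha : 0 ≤ a) (ha' : a < 1/2) (hb : 1/2 ≤ b) (hb' : b < 1) :
    stepV (tv a b) = tv (a + 1/2) b := by
  have h1 : rep (tv a b).1 = a := rep_coe (by linarith) (by linarith)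
  have h2 : rep (tv a b).2 = b := rep_coe (by linarith) (by linarith)
  rw [stepV_eq le_rfl (by right; rw [h2]; linarith), chaconU]
  simp only [h1, h2]
  rw [if_pos ⟨ha, ha', hb, hb'⟩, tv_add, add_zero]

lemma stepV_base_right {a b : ℝ} (ha : 1/2 ≤ a) (ha' : a < 1) (hb : 1/2 ≤ b) (hb' : b < 1) :
    stepV (tv a b) = tv (a - 1/2) (b - 1/2) := by
  have h1 : rep (tv a b).1 = a := rep_coe (by linarith) (by linarith)
  have h2 : rep (tv a b).2 = b := rep_coe (by linarith) (by linarith)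
  rw [stepV_eq le_rfl (by right; rw [h2]; linarith), chaconU]
  simp only [h1, h2]
  rw [if_neg (by rintro ⟨-, h, -⟩; linarith), if_pos ⟨ha, ha', hb, hb'⟩, tv_add,
    ← sub_eq_add_neg, ← sub_eq_add_neg]

lemma scale_bound {m : ℕ} (hm : 2 ≤ m) : (0:ℝ) < 1 / 2 ^ m ∧ (1:ℝ) / 2 ^ m ≤ 1 / 4 := by
  refine ⟨by positivity, ?_⟩
  have : (2:ℝ) ^ 2 ≤ 2 ^ m := pow_le_pow_right₀ (by norm_num) hm
  exact one_div_le_one_div_of_le (by norm_num) (by linarith)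

/-- From the top left quadrant of the top level of stage `m - 1` directly to the base of stage `m - 1`. -/
lemma stepV_top_left {m : ℕ} (hm : 2 ≤ m) {s a b : ℝ} (hs : s = 1 / 2 ^ m)
    (ha : 1 - 4*s ≤ a) (ha' : a < 1 - 3*s) (hb : s ≤ b) (hb' : b < 2*s) :
    stepV (tv a b) = tv (a + (5*s - 1)) (b + (1 - 2*s)) := by
  obtain ⟨hs0, hs4⟩ := scale_bound hm
  rw [← hs] at hs0 hs4
  have h1 : rep (tv a b).1 = a := rep_coe (by linarith) (by linarith)
  have h2 : rep (tv a b).2 = b := rep_coe (by linarith) (by linarith)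
  rw [stepV_eq (by omega : 1 ≤ m) (by rw [Settled, ← hs]; right; rw [h2]; linarith)]
  obtain ⟨k, rfl⟩ : ∃ k, m = k + 2 := ⟨m - 2, by omega⟩
  rw [chaconU]
  simp only [h1, h2, ← hs]
  rw [if_pos ⟨ha, ha', hb, hb'⟩, tv_add]

/-- From the top right quadrant of the top level of stage `m - 1` to the spacer of stage `m - 1`. -/
lemma stepV_top_right {m : ℕ} (hm : 2 ≤ m) {s a b : ℝ} (hs : s = 1 / 2 ^ m)
    (ha : 1 - 3*s ≤ a) (ha' : a < 1 - 2*s) (hb : s ≤ b) (hb' : b < 2*s) :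
    stepV (tv a b) = tv (a + s) b := by
  obtain ⟨hs0, hs4⟩ := scale_bound hm
  rw [← hs] at hs0 hs4
  have h1 : rep (tv a b).1 = a := rep_coe (by linarith) (by linarith)
  have h2 : rep (tv a b).2 = b := rep_coe (by linarith) (by linarith)
  rw [stepV_eq (by omega : 1 ≤ m) (by rw [Settled, ← hs]; right; rw [h2]; linarith)]
  obtain ⟨k, rfl⟩ : ∃ k, m = k + 2 := ⟨m - 2, by omega⟩
  rw [chaconU]
  simp only [h1, h2, ← hs]
  iterate 1 rw [if_neg (by rintro ⟨h1, h2, h3, h4⟩; linarith)]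
  rw [if_pos ⟨ha, ha', hb, hb'⟩, tv_add, add_zero]

/-- From the bottom left quadrant of the top level of stage `m - 1` to the spacer of stage `m - 1`. -/
lemma stepV_bot_left {m : ℕ} (hm : 2 ≤ m) {s a b : ℝ} (hs : s = 1 / 2 ^ m)
    (ha : 1 - 4*s ≤ a) (ha' : a < 1 - 3*s) (hb : 0 ≤ b) (hb' : b < s) :
    stepV (tv a b) = tv (a + 3*s) (b + s) := by
  obtain ⟨hs0, hs4⟩ := scale_bound hm
  rw [← hs] at hs0 hs4
  have h1 : rep (tv a b).1 = a := rep_coe (by linarith) (by linarith)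
  have h2 : rep (tv a b).2 = b := rep_coe (by linarith) (by linarith)
  rw [stepV_eq (by omega : 1 ≤ m) (by rw [Settled, ← hs]; left; rw [h1]; linarith)]
  obtain ⟨k, rfl⟩ : ∃ k, m = k + 2 := ⟨m - 2, by omega⟩
  rw [chaconU]
  simp only [h1, h2, ← hs]
  iterate 2 rw [if_neg (by rintro ⟨h1, h2, h3, h4⟩; linarith)]
  rw [if_pos ⟨ha, ha', hb, hb'⟩, tv_add]

/-- From the bottom right quadrant of the top level of stage `m - 1` to the top level of stage `m`. -/
lemma stepV_bot_right {m : ℕ} (hm : 2 ≤ m) {s a b : ℝ} (hs : s = 1 / 2 ^ m)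
    (ha : 1 - 3*s ≤ a) (ha' : a < 1 - 2*s) (hb : 0 ≤ b) (hb' : b < s) :
    stepV (tv a b) = tv (a + s) b := by
  obtain ⟨hs0, hs4⟩ := scale_bound hm
  rw [← hs] at hs0 hs4
  have h1 : rep (tv a b).1 = a := rep_coe (by linarith) (by linarith)
  have h2 : rep (tv a b).2 = b := rep_coe (by linarith) (by linarith)
  rw [stepV_eq (by omega : 1 ≤ m) (by rw [Settled, ← hs]; left; rw [h1]; linarith)]
  obtain ⟨k, rfl⟩ : ∃ k, m = k + 2 := ⟨m - 2, by omega⟩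
  rw [chaconU]
  simp only [h1, h2, ← hs]
  iterate 3 rw [if_neg (by rintro ⟨h1, h2, h3, h4⟩; linarith)]
  rw [if_pos ⟨ha, ha', hb, hb'⟩, tv_add, add_zero]

/-- From the upper half of the spacer of stage `m - 1` to the base of stage `m - 1`. -/
lemma stepV_spacer {m : ℕ} (hm : 2 ≤ m) {s a b : ℝ} (hs : s = 1 / 2 ^ m)
    (ha : 1 - 2*s ≤ a) (ha' : a < 1) (hb : s ≤ b) (hb' : b < 2*s) :
    stepV (tv a b) = tv (a + (2*s - 1)) (b + (1 - 3*s)) := by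
  obtain ⟨hs0, hs4⟩ := scale_bound hm
  rw [← hs] at hs0 hs4
  have h1 : rep (tv a b).1 = a := rep_coe (by linarith) (by linarith)
  have h2 : rep (tv a b).2 = b := rep_coe (by linarith) (by linarith)
  rw [stepV_eq (by omega : 1 ≤ m) (by rw [Settled, ← hs]; right; rw [h2]; linarith)]
  obtain ⟨k, rfl⟩ : ∃ k, m = k + 2 := ⟨m - 2, by omega⟩
  rw [chaconU]
  simp only [h1, h2, ← hs]
  iterate 4 rw [if_neg (by rintro ⟨h1, h2, h3, h4⟩; linarith)]
  rw [if_pos ⟨ha, ha', hb, hb'⟩, tv_add]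

/-! ### The towers -/

lemma iterate_trans {f : T2 → T2} {i j : ℕ} {x y z : T2} (h : f^[i] x = y) (h' : f^[j] y = z) :
    f^[i + j] x = z := by
  rw [add_comm, Function.iterate_add_apply, h, h']

/-- The square with grid coordinates `(p, q)` and side `s` is a level of the tower with
`i` levels below it and `j` levels above it. The points of a level are described by their
offset `(u, v)` from its lower left corner, which is kept by the movement along the tower. -/
def IsLevel (s : ℝ) (p q i j : ℕ) : Prop :=
  ∀ u v : ℝ, 0 ≤ u → u < s → 0 ≤ v → v < s →
    stepV^[i] (tv u (1 - s + v)) = tv (p * s + u) (q * s + v) ∧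
    stepV^[j] (tv (p * s + u) (q * s + v)) = tv (1 - 2 * s + u) v

lemma tower_one (p q : ℕ) (hp : p < 2) (hq : q < 2) (hne : p = 1 → q ≠ 0) :
    ∃ i j, i + j = 2 ∧ IsLevel (1/2) p q i j := by
  have key : ∀ u v : ℝ, 0 ≤ u → u < 1/2 → 0 ≤ v → v < 1/2 →
      stepV (tv u (1/2 + v)) = tv (1/2 + u) (1/2 + v) ∧
      stepV (tv (1/2 + u) (1/2 + v)) = tv u v := by
    intro u v hu hu' hv hv'
    constructor
    · rw [stepV_base_left hu hu' (by linarith) (by linarith), add_comm u]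
    · rw [stepV_base_right (by linarith) (by linarith) (by linarith) (by linarith)]
      congr 1 <;> ring
  have e1 : (1:ℝ) - 1/2 = 1/2 := by norm_num
  have e2 : (1:ℝ) - 2 * (1/2) = 0 := by norm_num
  interval_cases p <;> interval_cases q
  · refine ⟨2, 0, rfl, fun u v hu hu' hv hv' => ?_⟩
    obtain ⟨k1, k2⟩ := key u v hu hu' hv hv'
    simp only [Function.iterate_succ_apply, Function.iterate_zero_apply, e1, e2, k1, k2]
    simp
  · refine ⟨0, 2, rfl, fun u v hu hu' hv hv' => ?_⟩
    obtain ⟨k1, k2⟩ := key u v hu hu' hv hv'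
    simp only [Function.iterate_succ_apply, Function.iterate_zero_apply, e1, e2, Nat.cast_zero,
      Nat.cast_one, zero_mul, one_mul, zero_add, k1, k2, and_self]
  · exact absurd rfl (hne rfl)
  · refine ⟨1, 1, rfl, fun u v hu hu' hv hv' => ?_⟩
    obtain ⟨k1, k2⟩ := key u v hu hu' hv hv'
    simp only [Function.iterate_succ_apply, Function.iterate_zero_apply, e1, e2,
      Nat.cast_one, one_mul, zero_add, k1, k2, and_self]

/-- The orbit of the point of offset `(u, v)` through the whole stage `m` tower (of side `s`),
cut at the passages between the four subcolumns of the stage `m - 1` tower; `g + 1` is the height of the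
latter. -/
lemma laps {m : ℕ} (hm : 2 ≤ m) {s : ℝ} (hs : s = 1 / 2 ^ m) {g : ℕ}
    (lap : ∀ u v : ℝ, 0 ≤ u → u < 2 * s → 0 ≤ v → v < 2 * s →
      stepV^[g] (tv u (1 - 2 * s + v)) = tv (1 - 4 * s + u) v)
    {u v : ℝ} (hu : 0 ≤ u) (hu' : u < s) (hv : 0 ≤ v) (hv' : v < s) :
    stepV^[g + 1] (tv u (1 - 2 * s + (s + v))) = tv (s + u) (1 - 2 * s + (s + v)) ∧
    stepV^[g + 1] (tv (s + u) (1 - 2 * s + (s + v))) = tv (1 - 2 * s + u) (s + v) ∧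
    stepV^[1] (tv (1 - 2 * s + u) (s + v)) = tv u (1 - 2 * s + v) ∧
    stepV^[g + 1] (tv u (1 - 2 * s + v)) = tv (1 - s + u) (s + v) ∧
    stepV^[1] (tv (1 - s + u) (s + v)) = tv (s + u) (1 - 2 * s + v) ∧
    stepV^[g + 1] (tv (s + u) (1 - 2 * s + v)) = tv (1 - 2 * s + u) v := by
  refine ⟨?_, ?_, ?_, ?_, ?_, ?_⟩
  · refine iterate_trans (lap _ _ (by linarith) (by linarith) (by linarith) (by linarith)) ?_
    rw [Function.iterate_one,
      stepV_top_left hm hs (by linarith) (by linarith) (by linarith) (by linarith)]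
    congr 1 <;> ring
  · refine iterate_trans (lap _ _ (by linarith) (by linarith) (by linarith) (by linarith)) ?_
    rw [Function.iterate_one,
      stepV_top_right hm hs (by linarith) (by linarith) (by linarith) (by linarith)]
    congr 1; ring
  · rw [Function.iterate_one,
      stepV_spacer hm hs (by linarith) (by linarith) (by linarith) (by linarith)]
    congr 1 <;> ring
  · refine iterate_trans (lap _ _ (by linarith) (by linarith) (by linarith) (by linarith)) ?_
    rw [Function.iterate_one,
      stepV_bot_left hm hs (by linarith) (by linarith) (by linarith) (by linarith)]
    congr 1 <;> ring
  · rw [Function.iterate_one,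
      stepV_spacer hm hs (by linarith) (by linarith) (by linarith) (by linarith)]
    congr 1 <;> ring
  · refine iterate_trans (lap _ _ (by linarith) (by linarith) (by linarith) (by linarith)) ?_
    rw [Function.iterate_one,
      stepV_bot_right hm hs (by linarith) (by linarith) (by linarith) (by linarith)]
    congr 1; ring

/-- Passage from the tower of stage `m - 1`, with `M` squares per side and height `g + 1`, to the
tower of stage `m`. -/
lemma tower_succ {m : ℕ} (hm : 2 ≤ m) {s : ℝ} (hs : s = 1 / 2 ^ m) {M g : ℕ}
    (hM : (M : ℝ) * (2 * s) = 1) (hM2 : 2 ≤ M)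
    (ih : ∀ p q : ℕ, p < M → q < M → (p + 1 = M → q ≠ 0) →
      ∃ i j, i + j = g ∧ IsLevel (2 * s) p q i j)
    (p q : ℕ) (hp : p < 2 * M) (hq : q < 2 * M) (hne : p + 1 = 2 * M → q ≠ 0) :
    ∃ i j, i + j = 4 * g + 6 ∧ IsLevel s p q i j := by
  have lap : ∀ u v : ℝ, 0 ≤ u → u < 2 * s → 0 ≤ v → v < 2 * s →
      stepV^[g] (tv u (1 - 2 * s + v)) = tv (1 - 4 * s + u) v := by
    intro u v hu hu' hv hv'
    obtain ⟨i, j, hij, h⟩ := ih 0 0 (by omega) (by omega) (by omega)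
    obtain ⟨h1, h2⟩ := h u v hu hu' hv hv'
    rw [← hij, iterate_trans h1 h2]
    congr 1; ring
  have L := fun u v hu hu' hv hv' => laps hm hs lap (u := u) (v := v) hu hu' hv hv'
  by_cases hsp : p / 2 + 1 = M ∧ q / 2 = 0
  · -- the parent square is the spacer of stage `m - 1`, whose quadrants other than the bottom right
    -- one are used as spacers
    have hcase : (p + 2 = 2 * M ∧ q = 1) ∨ (p + 1 = 2 * M ∧ q = 1) ∨ (p + 2 = 2 * M ∧ q = 0) := by
      omega
    rcases hcase with ⟨h1, rfl⟩ | ⟨h1, rfl⟩ | ⟨h1, rfl⟩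
    · have hp' : (p : ℝ) * s = 1 - 2 * s := by
        have : (p : ℝ) + 2 = 2 * M := by exact_mod_cast h1
        linear_combination s * this + hM
      refine ⟨(g + 1) + (g + 1), 1 + (g + 1) + 1 + (g + 1), by omega, fun u v hu hu' hv hv' => ?_⟩
      obtain ⟨l1, l2, l3, l4, l5, l6⟩ := L u v hu hu' hv hv'
      rw [hp', Nat.cast_one, one_mul, show 1 - s + v = 1 - 2 * s + (s + v) by ring]
      exact ⟨iterate_trans l1 l2, iterate_trans (iterate_trans (iterate_trans l3 l4) l5) l6⟩
    · have hp' : (p : ℝ) * s = 1 - s := by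
        have : (p : ℝ) + 1 = 2 * M := by exact_mod_cast h1
        linear_combination s * this + hM
      refine ⟨(g + 1) + (g + 1) + 1 + (g + 1), 1 + (g + 1), by omega, fun u v hu hu' hv hv' => ?_⟩
      obtain ⟨l1, l2, l3, l4, l5, l6⟩ := L u v hu hu' hv hv'
      rw [hp', Nat.cast_one, one_mul, show 1 - s + v = 1 - 2 * s + (s + v) by ring]
      exact ⟨iterate_trans (iterate_trans (iterate_trans l1 l2) l3) l4, iterate_trans l5 l6⟩
    · have hp' : (p : ℝ) * s = 1 - 2 * s := by
        have : (p : ℝ) + 2 = 2 * M := by exact_mod_cast h1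
        linear_combination s * this + hM
      refine ⟨(g + 1) + (g + 1) + 1 + (g + 1) + 1 + (g + 1), 0, by omega,
        fun u v hu hu' hv hv' => ?_⟩
      obtain ⟨l1, l2, l3, l4, l5, l6⟩ := L u v hu hu' hv hv'
      rw [hp', Nat.cast_zero, zero_mul, zero_add, show 1 - s + v = 1 - 2 * s + (s + v) by ring]
      exact ⟨iterate_trans (iterate_trans (iterate_trans (iterate_trans (iterate_trans
        l1 l2) l3) l4) l5) l6, rfl⟩
  · obtain ⟨i, j, hij, hl⟩ := ih (p / 2) (q / 2) (by omega) (by omega)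
      (fun h1 h2 => hsp ⟨h1, h2⟩)
    -- from the top of a subcolumn one more step leads on, as recorded in `laps`
    have hcut : ∀ {u v : ℝ} {y : T2}, 0 ≤ u → u < 2 * s → 0 ≤ v → v < 2 * s →
        stepV^[g + 1] (tv u (1 - 2 * s + v)) = y →
        stepV^[j + 1] (tv ((p / 2 : ℕ) * (2 * s) + u) ((q / 2 : ℕ) * (2 * s) + v)) = y := by
      intro u v y hu hu' hv hv' h
      rw [← (hl u v hu hu' hv hv').1, ← Function.iterate_add_apply,
        show j + 1 + i = g + 1 by omega, h]
    obtain ⟨α, hα, hpα⟩ : ∃ α < 2, p = 2 * (p / 2) + α := ⟨p % 2, by omega, by omega⟩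
    obtain ⟨β, hβ, hqβ⟩ : ∃ β < 2, q = 2 * (q / 2) + β := ⟨q % 2, by omega, by omega⟩
    generalize p / 2 = p' at *
    generalize q / 2 = q' at *
    subst hpα hqβ
    interval_cases α <;> interval_cases β
    · refine ⟨(g + 1) + (g + 1) + 1 + i, (j + 1) + 1 + (g + 1), by omega,
        fun u v hu hu' hv hv' => ?_⟩
      obtain ⟨l1, l2, l3, l4, l5, l6⟩ := L u v hu hu' hv hv'
      have e : tv ((2 * p' + 0 : ℕ) * s + u) ((2 * q' + 0 : ℕ) * s + v) =
          tv (p' * (2 * s) + u) (q' * (2 * s) + v) := by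
        push_cast; congr 1 <;> ring
      have c := hcut hu (by linarith) hv (by linarith) l4
      have b := (hl u v hu (by linarith) hv (by linarith)).1
      rw [e, show 1 - s + v = 1 - 2 * s + (s + v) by ring]
      exact ⟨iterate_trans (iterate_trans (iterate_trans l1 l2) l3) b,
        iterate_trans (iterate_trans c l5) l6⟩
    · refine ⟨i, (j + 1) + (g + 1) + 1 + (g + 1) + 1 + (g + 1), by omega,
        fun u v hu hu' hv hv' => ?_⟩
      obtain ⟨l1, l2, l3, l4, l5, l6⟩ := L u v hu hu' hv hv'
      have e : tv ((2 * p' + 0 : ℕ) * s + u) ((2 * q' + 1 : ℕ) * s + v) =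
          tv (p' * (2 * s) + u) (q' * (2 * s) + (s + v)) := by
        push_cast; congr 1 <;> ring
      have c := hcut hu (by linarith) (by linarith) (by linarith) l1
      have b := (hl u (s + v) hu (by linarith) (by linarith) (by linarith)).1
      rw [e, show 1 - s + v = 1 - 2 * s + (s + v) by ring]
      exact ⟨b, iterate_trans (iterate_trans (iterate_trans (iterate_trans (iterate_trans
        c l2) l3) l4) l5) l6⟩
    · refine ⟨(g + 1) + (g + 1) + 1 + (g + 1) + 1 + i, j + 1, by omega,
        fun u v hu hu' hv hv' => ?_⟩
      obtain ⟨l1, l2, l3, l4, l5, l6⟩ := L u v hu hu' hv hv'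
      have e : tv ((2 * p' + 1 : ℕ) * s + u) ((2 * q' + 0 : ℕ) * s + v) =
          tv (p' * (2 * s) + (s + u)) (q' * (2 * s) + v) := by
        push_cast; congr 1 <;> ring
      have c := hcut (by linarith) (by linarith) hv (by linarith) l6
      have b := (hl (s + u) v (by linarith) (by linarith) hv (by linarith)).1
      rw [e, show 1 - s + v = 1 - 2 * s + (s + v) by ring]
      exact ⟨iterate_trans (iterate_trans (iterate_trans (iterate_trans (iterate_trans
        l1 l2) l3) l4) l5) b, c⟩
    · refine ⟨(g + 1) + i, (j + 1) + 1 + (g + 1) + 1 + (g + 1), by omega,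
        fun u v hu hu' hv hv' => ?_⟩
      obtain ⟨l1, l2, l3, l4, l5, l6⟩ := L u v hu hu' hv hv'
      have e : tv ((2 * p' + 1 : ℕ) * s + u) ((2 * q' + 1 : ℕ) * s + v) =
          tv (p' * (2 * s) + (s + u)) (q' * (2 * s) + (s + v)) := by
        push_cast; congr 1 <;> ring
      have c := hcut (by linarith) (by linarith) (by linarith) (by linarith) l2
      have b := (hl (s + u) (s + v) (by linarith) (by linarith) (by linarith) (by linarith)).1
      rw [e, show 1 - s + v = 1 - 2 * s + (s + v) by ring]
      exact ⟨iterate_trans l1 b,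
        iterate_trans (iterate_trans (iterate_trans (iterate_trans c l3) l4) l5) l6⟩

/-- Every square of stage `n ≥ 1` other than the bottom right one is a level of the tower of
height `4 ^ n - 1`. -/
lemma tower {n : ℕ} (hn : 1 ≤ n) : ∀ p q : ℕ, p < 2 ^ n → q < 2 ^ n → (p + 1 = 2 ^ n → q ≠ 0) →
    ∃ i j, i + j = 4 ^ n - 2 ∧ IsLevel (1 / 2 ^ n) p q i j := by
  induction n, hn using Nat.le_induction with
  | base =>
    intro p q hp hq hne
    simpa using tower_one p q (by simpa using hp) (by simpa using hq) (by simpa using hne)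
  | succ n hn ih =>
    have e : (1:ℝ) / 2 ^ n = 2 * (1 / 2 ^ (n + 1)) := by rw [pow_succ]; field_simp
    rw [e] at ih
    have hM : (2 : ℕ) ≤ 2 ^ n := by
      simpa using Nat.pow_le_pow_right (show 0 < 2 by norm_num) hn
    have h4 : 4 ≤ 4 ^ n := by
      simpa using Nat.pow_le_pow_right (show 0 < 4 by norm_num) hn
    have := tower_succ (m := n + 1) (by omega) rfl (M := 2 ^ n)
      (by rw [← e]; push_cast; field_simp) hM ih
    intro p q hp hq hne
    rw [pow_succ, mul_comm] at hp hq hne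
    have hg : 4 ^ (n + 1) - 2 = 4 * (4 ^ n - 2) + 6 := by rw [pow_succ]; omega
    rw [hg]
    exact this p q hp hq hne

/-- The top left quadrant of a level returns to the level after `4 ^ n - 1` steps, translated
by half a side: the top left subcolumn is followed immediately by the top right one. -/
lemma stepV_return {n : ℕ} (hn : 1 ≤ n) {s : ℝ} (hs : s = 1 / 2 ^ (n + 1)) {p q : ℕ}
    (hp : p < 2 ^ n) (hq : q < 2 ^ n) (hq0 : q ≠ 0) {a b : ℝ}
    (ha : p * (2 * s) ≤ a) (ha' : a < p * (2 * s) + s)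
    (hb : q * (2 * s) + s ≤ b) (hb' : b < q * (2 * s) + 2 * s) :
    stepV^[4 ^ n - 1] (tv a b) = tv (a + s) b := by
  have e : (1:ℝ) / 2 ^ n = 2 * s := by rw [hs, pow_succ]; field_simp
  obtain ⟨i, j, hij, hl⟩ := tower hn p q hp hq (fun _ => hq0)
  rw [e] at hl
  have hs0 : 0 < s := by rw [hs]; positivity
  have h4 : 4 ≤ 4 ^ n := by
    simpa using Nat.pow_le_pow_right (show 0 < 4 by norm_num) hn
  have h1 := (hl (a - p * (2 * s)) (b - q * (2 * s)) (by linarith) (by linarith) (by linarith)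
    (by linarith)).2
  have h2 := (hl (a - p * (2 * s) + s) (b - q * (2 * s)) (by linarith) (by linarith)
    (by linarith) (by linarith)).1
  have h3 : stepV^[1] (tv (1 - 2 * (2 * s) + (a - p * (2 * s))) (b - q * (2 * s))) =
      tv (a - p * (2 * s) + s) (1 - 2 * s + (b - q * (2 * s))) := by
    rw [Function.iterate_one, stepV_top_left (by omega : 2 ≤ n + 1) hs (by linarith) (by linarith)
      (by linarith) (by linarith)]
    congr 1 <;> ring
  have h := iterate_trans (iterate_trans h1 h3) h2
  rw [show j + 1 + i = 4 ^ n - 1 by omega] at h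
  convert h using 2 <;> ring_nf

/-! ### The square `A` and its returning quarter -/

/-- The square `[0,1/4) × [3/4,1)`. -/
def squareA : Set T2 := {x : T2 | 0 ≤ rep x.1 ∧ rep x.1 < 1/4 ∧ 3/4 ≤ rep x.2 ∧ rep x.2 < 1}

lemma volume_squareA : volume squareA = 1/16 := by
  have h : squareA = {x : AddCircle (1:ℝ) | 0 ≤ rep x ∧ rep x < 1/4} ×ˢ
      {x : AddCircle (1:ℝ) | 3/4 ≤ rep x ∧ rep x < 1} := by
    ext x
    simp only [squareA, mem_ofPred_eq, mem_prod, and_assoc]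
  rw [h, Measure.volume_eq_prod, Measure.prod_prod, volume_rep_Ico le_rfl (by norm_num),
    volume_rep_Ico (by norm_num) le_rfl, ← ENNReal.ofReal_mul (by norm_num),
    show ((1:ℝ)/4 - 0) * (1 - 3/4) = 1/16 by norm_num, ENNReal.ofReal_div_of_pos (by norm_num)]
  simp

/-- The points of `squareA` in the top left quadrant of their dyadic square of side `2 * s`. -/
def quarterA (s : ℝ) : Set T2 := {x : T2 | x ∈ squareA ∧ ∃ p q : ℕ,
  p * (2 * s) ≤ rep x.1 ∧ rep x.1 < p * (2 * s) + s ∧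
  q * (2 * s) + s ≤ rep x.2 ∧ rep x.2 < q * (2 * s) + 2 * s}

/-- A grid interval of length `w` that contains a point below `N * w` lies below `N * w`. -/
lemma cell_end_le {w a : ℝ} (hw : 0 < w) {N p : ℕ} (hp : p * w ≤ a) (ha : a < N * w) :
    (p + 1 : ℝ) * w ≤ N * w := by
  have h : (p : ℝ) < N := lt_of_mul_lt_mul_right (hp.trans_lt ha) hw.le
  have h' : (p : ℝ) + 1 ≤ N := by exact_mod_cast h
  exact mul_le_mul_of_nonneg_right h' hw.le

/-- The four translates of the quarter by multiples of `s` cover `squareA`. -/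
lemma volume_quarterA {n : ℕ} {s : ℝ} (hs : s = 1 / 2 ^ (n + 1)) :
    1/64 ≤ volume (quarterA s) := by
  have hs0 : 0 < s := by rw [hs]; positivity
  have hone : ((2 ^ n : ℕ) : ℝ) * (2 * s) = 1 := by
    rw [hs, pow_succ]; push_cast; field_simp
  have hcov : squareA ⊆ quarterA s ∪ (fun x => x + tv (-s) 0) ⁻¹' quarterA s ∪
      (fun x => x + tv 0 s) ⁻¹' quarterA s ∪ (fun x => x + tv (-s) s) ⁻¹' quarterA s := by
    intro x hx
    obtain ⟨hx1, hx2, hx3, hx4⟩ := hx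
    have cell : ∀ a : ℝ, 0 ≤ a → ∃ p : ℕ, p * (2 * s) ≤ a ∧ a < p * (2 * s) + 2 * s := by
      intro a ha
      refine ⟨⌊a / (2 * s)⌋₊, ?_, ?_⟩
      · rw [← le_div_iff₀ (by linarith)]
        exact Nat.floor_le (by positivity)
      · have := Nat.lt_floor_add_one (a / (2 * s))
        rw [div_lt_iff₀ (by linarith)] at this
        linarith
    obtain ⟨p, hp, hp'⟩ := cell _ hx1
    obtain ⟨q, hq, hq'⟩ := cell (rep x.2) (by linarith)
    have hps : (0:ℝ) ≤ p * (2 * s) := by positivity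
    have hqe := cell_end_le (N := 2 ^ n) (by linarith) hq (by rw [hone]; exact hx4)
    rw [hone] at hqe
    have mem : ∀ c d : ℝ, p * (2 * s) ≤ rep x.1 + c → rep x.1 + c < p * (2 * s) + s →
        rep x.1 + c ≤ rep x.1 → q * (2 * s) + s ≤ rep x.2 + d →
        rep x.2 + d < q * (2 * s) + 2 * s → rep x.2 ≤ rep x.2 + d →
        x + tv c d ∈ quarterA s := by
      intro c d h1 h2 h3 h4 h5 h6
      have e : x + tv c d = tv (rep x.1 + c) (rep x.2 + d) := by
        rw [← tv_add, tv_rep]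
      have e1 : rep (x + tv c d).1 = rep x.1 + c := by
        rw [e]; exact rep_coe (by linarith) (by linarith)
      have e2 : rep (x + tv c d).2 = rep x.2 + d := by
        rw [e]; exact rep_coe (by linarith) (by linarith)
      refine ⟨⟨?_, ?_, ?_, ?_⟩, p, q, ?_⟩
      · rw [e1]; linarith
      · rw [e1]; linarith
      · rw [e2]; linarith
      · rw [e2]; linarith
      · rw [e1, e2]; exact ⟨h1, h2, h4, h5⟩
    rcases lt_or_ge (rep x.1) (p * (2 * s) + s) with h1 | h1 <;>
      rcases lt_or_ge (rep x.2) (q * (2 * s) + s) with h2 | h2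
    · left; right
      exact mem 0 s (by linarith) (by linarith) (by linarith) (by linarith) (by linarith)
        (by linarith)
    · left; left; left
      exact ⟨⟨hx1, hx2, hx3, hx4⟩, p, q, hp, h1, h2, hq'⟩
    · right
      exact mem (-s) s (by linarith) (by linarith) (by linarith) (by linarith) (by linarith)
        (by linarith)
    · left; left; right
      exact mem (-s) 0 (by linarith) (by linarith) (by linarith) (by linarith) (by linarith)
        (by linarith)
  have h4 : (1/16 : ℝ≥0∞) ≤ 4 * volume (quarterA s) := by
    rw [← volume_squareA]
    refine (measure_mono hcov).trans ((measure_union_le _ _).trans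
      ((add_le_add_left ((measure_union_le _ _).trans
        (add_le_add_left (measure_union_le _ _) _)) _).trans ?_))
    have ht : ∀ t : T2, volume ((fun x => x + t) ⁻¹' quarterA s) = volume (quarterA s) :=
      fun t => by
        rw [Measure.volume_eq_prod]
        exact measure_preimage_add_right _ t _
    rw [ht, ht, ht]
    apply le_of_eq
    ring
  have h5 : (1/64 : ℝ≥0∞) = 4⁻¹ * (1/16) := by
    rw [one_div, one_div, ← ENNReal.mul_inv (by simp) (by simp)]
    norm_num
  rw [h5]
  calc (4⁻¹ : ℝ≥0∞) * (1/16) ≤ 4⁻¹ * (4 * volume (quarterA s)) := by gcongr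
    _ = volume (quarterA s) := by
      rw [← mul_assoc, ENNReal.inv_mul_cancel (by simp) (by simp), one_mul]

lemma quarterA_return {n : ℕ} (hn : 2 ≤ n) {s : ℝ} (hs : s = 1 / 2 ^ (n + 1)) {x : T2}
    (hx : x ∈ quarterA s) : stepV^[4 ^ n - 1] x ∈ squareA := by
  have hs0 : 0 < s := by rw [hs]; positivity
  have hone : ((2 ^ n : ℕ) : ℝ) * (2 * s) = 1 := by
    rw [hs, pow_succ]; push_cast; field_simp
  have hquarter : ((2 ^ (n - 2) : ℕ) : ℝ) * (2 * s) = 1/4 := by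
    obtain ⟨k, rfl⟩ : ∃ k, n = k + 2 := ⟨n - 2, by omega⟩
    rw [Nat.add_sub_cancel, hs]
    push_cast
    rw [pow_succ (2:ℝ) (k + 2), pow_add]
    field_simp
    norm_num
  have hsq : s ≤ 1/8 := by
    have : (1:ℝ) ≤ ((2 ^ (n - 2) : ℕ) : ℝ) := by exact_mod_cast Nat.one_le_two_pow
    nlinarith
  obtain ⟨⟨hx1, hx2, hx3, hx4⟩, p, q, hp, hp', hq, hq'⟩ := hx
  have hpe := cell_end_le (N := 2 ^ (n - 2)) (by linarith) hp (by rw [hquarter]; exact hx2)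
  rw [hquarter] at hpe
  have lt_of_le : ∀ {r : ℕ} {a : ℝ}, r * (2 * s) ≤ a → a < 1 → r < 2 ^ n := by
    intro r a h h'
    have : (r : ℝ) < (2 ^ n : ℕ) :=
      lt_of_mul_lt_mul_right (by rw [hone]; linarith) (by linarith : 0 ≤ 2 * s)
    exact_mod_cast this
  have hq0 : q ≠ 0 := by
    rintro rfl
    rw [Nat.cast_zero, zero_mul] at hq'
    linarith
  have h := stepV_return (by omega : 1 ≤ n) hs (lt_of_le hp (rep_lt_one _))
    (lt_of_le (by linarith : q * (2 * s) ≤ rep x.2) hx4) hq0 hp hp' hq hq'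
  rw [tv_rep] at h
  have e1 : rep (tv (rep x.1 + s) (rep x.2)).1 = rep x.1 + s :=
    rep_coe (by linarith) (by linarith)
  have e2 : rep (tv (rep x.1 + s) (rep x.2)).2 = rep x.2 :=
    rep_coe (by linarith) (by linarith)
  rw [h]
  refine ⟨?_, ?_, ?_, ?_⟩
  · rw [e1]; linarith
  · rw [e1]; linarith
  · rw [e2]; exact hx3
  · rw [e2]; exact hx4

lemma ae_iterate_eq {U : T2 → T2} (hU : MeasurePreserving U volume volume)
    (h : ∀ᵐ x ∂(volume : Measure T2), U x = stepV x) (m : ℕ) :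
    ∀ᵐ x ∂(volume : Measure T2), U^[m] x = stepV^[m] x := by
  induction m with
  | zero => simp
  | succ m ih =>
    filter_upwards [h, hU.quasiMeasurePreserving.ae ih] with x h1 h2
    rw [Function.iterate_succ_apply, Function.iterate_succ_apply, h2, h1]


/-- The a.e. limit `U` of the Chacon-type maps is not strongly mixing: for the square
`A = [0,1/4) × [3/4,1)` (of measure `1/16`), `μ(U^{-(4^{k-1}-1)}(A) ∩ A) ≥ 1/64` for all
`k ≥ 3`, hence `μ(U^{-n}(A) ∩ A)` does not converge to `μ(A)² = 1/256`. -/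
theorem chacon_not_strongly_mixing (U : T2 → T2)
    (hU : IsAutomorphism U)
    (hlim : ∀ᵐ x ∂(volume : Measure T2), ∃ N : ℕ, ∀ n, N ≤ n → chaconU n x = U x)
    (A : Set T2)
    (hA : A = {x : T2 | 0 ≤ rep x.1 ∧ rep x.1 < 1/4 ∧ 3/4 ≤ rep x.2 ∧ rep x.2 < 1}) :
    volume A = 1/16 ∧ (volume A) ^ 2 = 1/256 ∧
    (∀ k : ℕ, 3 ≤ k → (1/64 : ℝ≥0∞) ≤ volume (U^[4 ^ (k-1) - 1] ⁻¹' A ∩ A)) ∧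
    ¬ Tendsto (fun n : ℕ => volume (U^[n] ⁻¹' A ∩ A)) atTop (nhds ((volume A) ^ 2)) := by
  obtain ⟨hmeas, -, -, -, -, hpres⟩ := hU
  have hMP : MeasurePreserving U volume volume :=
    ⟨hmeas, Measure.ext fun B hB => by rw [Measure.map_apply hmeas hB, hpres B hB]⟩
  have hUV : ∀ᵐ x ∂(volume : Measure T2), U x = stepV x := by
    filter_upwards [hlim] with x ⟨N, hN⟩
    obtain ⟨n, hn, hx⟩ := exists_settled x
    rw [← hN (max N n) (le_max_left _ _), chaconU_stable hn (le_max_right _ _) hx,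
      stepV_eq hn hx]
  change A = squareA at hA
  subst hA
  have hsq : (volume squareA) ^ 2 = 1/256 := by
    rw [volume_squareA, one_div, one_div, ← ENNReal.inv_pow]
    norm_num
  have hmain : ∀ k : ℕ, 3 ≤ k →
      (1/64 : ℝ≥0∞) ≤ volume (U^[4 ^ (k-1) - 1] ⁻¹' squareA ∩ squareA) := by
    intro k hk
    refine (volume_quarterA (n := k - 1) rfl).trans (measure_mono_ae ?_)
    filter_upwards [ae_iterate_eq hMP hUV (4 ^ (k-1) - 1)] with x hx hxq
    refine ⟨?_, hxq.1⟩
    change U^[4 ^ (k-1) - 1] x ∈ squareA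
    rw [hx]
    exact quarterA_return (by omega) rfl hxq
  refine ⟨volume_squareA, hsq, hmain, fun hT => ?_⟩
  have hsub : Tendsto (fun k : ℕ => 4 ^ (k-1) - 1) atTop atTop := by
    refine tendsto_atTop_mono (fun k => ?_) (tendsto_sub_atTop_nat 1)
    have := Nat.lt_pow_self (show 1 < 4 by norm_num) (n := k - 1)
    omega
  have hle : (1/64 : ℝ≥0∞) ≤ 1/256 := by
    rw [← hsq]
    refine ge_of_tendsto (hT.comp hsub) ?_
    filter_upwards [eventually_ge_atTop 3] with k hk using hmain k hk
  rw [one_div, one_div, ENNReal.inv_le_inv] at hle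
  norm_num at hle

end
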